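/- arXiv:1711.01816 — 2 statements merged into one kernel-verified Lean document; each statement's English description precedes it below -/
import Mathlib

section
/- Let C be a Z₂Z₄[ξ]-linear code of type (r,s;k₀;k₁,k₂) with standard-form generator matrix G = [[I_{k₀}, Ā₀₁ | 0, 0, 2T], [0, S | I_{k₁}, A₀₁, A₀₂], [0, 0 | 0, 2I_{k₂}, 2A₁₂]]. Then the dual code C⊥ is exactly the set of R₄-linear combinations (via *) of the rows of the block matrix H = [[−Ā₀₁ᵀ, I_{r−k₀} | −2Sᵀ, 0, 0], [−Tᵀ, 0 | −A₀₂ᵀ + A₁₂ᵀA₀₁ᵀ, −A₁₂ᵀ, I_{s−k₁−k₂}], [0, 0 | −2A₀₁ᵀ, 2I_{k₂}, 0]], where the first two column blocks (r columns, entries reduced mod 2 where necessary) lie in R₂ and the last three column blocks (of widths k₁, k₂, s−k₁−k₂) lie in R₄. -/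
set_option synthInstance.maxHeartbeats 1000000
set_option maxHeartbeats 2000000

noncomputable section
open Polynomial

abbrev Z4 : Type := ZMod 4
abbrev Z2 : Type := ZMod 2

/-- The mod 2 reduction map `Z₄ → Z₂`. -/
def bar : Z4 →+* Z2 := ZMod.castHom (m := 2) (by norm_num) Z2

/-- The ring `R₄ = Z₄[x]/⟨h⟩` (for `h` basic primitive, the Galois ring `GR(4,m)`). -/
abbrev R4 (h : Z4[X]) : Type := Z4[X] ⧸ Ideal.span {h}

/-- The ring `R₂ = Z₂[x]/⟨h̄⟩` (for `h` basic primitive, the field `F_{2^m}`). -/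
abbrev R2 (h : Z4[X]) : Type := Z2[X] ⧸ Ideal.span {h.map bar}

/-- `ξ`, the class of `x` in `R₄`. -/
def xi (h : Z4[X]) : R4 h := Ideal.Quotient.mk _ X

/-- `ξ̄`, the class of `x` in `R₂`. -/
def xibar (h : Z4[X]) : R2 h := Ideal.Quotient.mk _ X

/-- The coefficientwise mod 2 reduction `R₄ → R₂`. -/
def barR (h : Z4[X]) : R4 h →+* R2 h :=
  Ideal.quotientMap (Ideal.span {h.map bar}) (Polynomial.mapRingHom bar)
    (by
      rw [Ideal.span_le]
      intro p hp
      simp only [Set.mem_singleton_iff] at hp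
      subst hp
      exact Ideal.mem_comap.mpr (Ideal.subset_span (by simp)))

/-- The canonical representative (of degree `< deg h`) of an element of `R₄`. -/
def rep4 (h : Z4[X]) (α : R4 h) : Z4[X] := Quotient.out α %ₘ h

/-- The canonical representative (of degree `< deg h̄`) of an element of `R₂`. -/
def rep2 (h : Z4[X]) (α : R2 h) : Z2[X] := Quotient.out α %ₘ (h.map bar)

/-- The Frobenius map `θ₄ : ∑ vᵢ ξ^i ↦ ∑ vᵢ ξ^{2i}` of `R₄`, as a bare function:
substitute `ξ²` in the canonical representative. -/
def thetaFun4 (h : Z4[X]) (α : R4 h) : R4 h := Polynomial.aeval (xi h ^ 2) (rep4 h α)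

/-- The Frobenius map `θ₂ : ∑ vᵢ ξ̄^i ↦ ∑ vᵢ ξ̄^{2i}` of `R₂`, as a bare function. -/
def thetaFun2 (h : Z4[X]) (α : R2 h) : R2 h := Polynomial.aeval (xibar h ^ 2) (rep2 h α)

/-- A lift `ι : R₂ → R₄` with `ι` mod 2 the identity: lift the coefficients of the
canonical representative from `{0,1}`. -/
def iota (h : Z4[X]) (α : R2 h) : R4 h :=
  Ideal.Quotient.mk _ ((rep2 h α).sum fun i a => C ((a.val : Z4)) * X ^ i)

/-- `h` is a monic basic primitive polynomial of degree `m`:  `h` is monic, its mod 2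
reduction `h̄` is irreducible over `Z₂`, and the root `ξ̄` of `h̄` is a primitive
element, i.e. has multiplicative order `2^m - 1`. -/
def BasicPrimitive (h : Z4[X]) (m : ℕ) : Prop :=
  h.Monic ∧ h.natDegree = m ∧ Irreducible (h.map bar) ∧ orderOf (xibar h) = 2 ^ m - 1

/-- The scalar multiplication `γ * (α,β) = (γ̄α, γβ)` making `R₂^r × R₄^s` (or any
mixed-alphabet tuple space) an `R₄`-module. -/
def smulStar (h : Z4[X]) {α β : Type*} (γ : R4 h) (v : (α → R2 h) × (β → R4 h)) :
    (α → R2 h) × (β → R4 h) :=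
  (fun i => barR h γ * v.1 i, fun j => γ * v.2 j)


/-- A `Z₂Z₄[ξ]`-linear code: an `R₄`-submodule of `R₂^r × R₄^s` (as a set). -/
def IsZ2Z4Linear (h : Z4[X]) {r s : ℕ} (C : Set ((Fin r → R2 h) × (Fin s → R4 h))) : Prop :=
  0 ∈ C ∧ (∀ u ∈ C, ∀ v ∈ C, u + v ∈ C) ∧ ∀ γ : R4 h, ∀ u ∈ C, smulStar h γ u ∈ C

/-! ### Standard generator and parity-check matrices -/

/-- The set of all `R₄`-linear combinations (via the action `*`) of a finite family of
rows in `R₂^α × R₄^β`. -/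
def rowSpan (h : Z4[X]) {ι α β : Type*} [Fintype ι]
    (rows : ι → (α → R2 h) × (β → R4 h)) : Set ((α → R2 h) × (β → R4 h)) :=
  {v | ∃ c : ι → R4 h, v = ∑ i, smulStar h (c i) (rows i)}

/-- The rows of the standard form generator matrix
`G = [[I_{k₀}, Ā₀₁ | 0, 0, 2T], [0, S | I_{k₁}, A₀₁, A₀₂], [0, 0 | 0, 2I_{k₂}, 2A₁₂]]`. -/
def stdGenRows (h : Z4[X]) {r s k0 k1 k2 : ℕ}
    (A01b : Matrix (Fin k0) (Fin (r - k0)) (R2 h))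
    (S : Matrix (Fin k1) (Fin (r - k0)) (R2 h))
    (T : Matrix (Fin k0) (Fin (s - k1 - k2)) (R4 h))
    (A01 : Matrix (Fin k1) (Fin k2) (R4 h))
    (A02 : Matrix (Fin k1) (Fin (s - k1 - k2)) (R4 h))
    (A12 : Matrix (Fin k2) (Fin (s - k1 - k2)) (R4 h)) :
    (Fin k0 ⊕ Fin k1 ⊕ Fin k2) →
      ((Fin k0 ⊕ Fin (r - k0)) → R2 h) × ((Fin k1 ⊕ Fin k2 ⊕ Fin (s - k1 - k2)) → R4 h) :=
  fun row =>
    (fun col =>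
      match row, col with
      | .inl i, .inl j => if i = j then 1 else 0
      | .inl i, .inr j => A01b i j
      | .inr (.inl i), .inr j => S i j
      | _, _ => 0,
     fun col =>
      match row, col with
      | .inl i, .inr (.inr j) => 2 * T i j
      | .inr (.inl i), .inl j => if i = j then 1 else 0
      | .inr (.inl i), .inr (.inl j) => A01 i j
      | .inr (.inl i), .inr (.inr j) => A02 i j
      | .inr (.inr i), .inr (.inl j) => if i = j then 2 else 0
      | .inr (.inr i), .inr (.inr j) => 2 * A12 i j
      | _, _ => 0)

/-- `C` is (permutation equivalent to) a code of type `(r,s;k₀;k₁,k₂)`:  after a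
permutation of the first `r` and of the last `s` coordinates (encoded by the
relabelings `e2`, `e4`) the code is exactly the `R₄`-span of the rows of the standard
form generator matrix. -/
def IsTypeCode (h : Z4[X]) (r s k0 k1 k2 : ℕ)
    (C : Set ((Fin r → R2 h) × (Fin s → R4 h))) : Prop :=
  ∃ (A01b : Matrix (Fin k0) (Fin (r - k0)) (R2 h))
    (S : Matrix (Fin k1) (Fin (r - k0)) (R2 h))
    (T : Matrix (Fin k0) (Fin (s - k1 - k2)) (R4 h))
    (A01 : Matrix (Fin k1) (Fin k2) (R4 h))
    (A02 : Matrix (Fin k1) (Fin (s - k1 - k2)) (R4 h))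
    (A12 : Matrix (Fin k2) (Fin (s - k1 - k2)) (R4 h))
    (e2 : Fin r ≃ (Fin k0 ⊕ Fin (r - k0)))
    (e4 : Fin s ≃ (Fin k1 ⊕ Fin k2 ⊕ Fin (s - k1 - k2))),
    (fun v : (Fin r → R2 h) × (Fin s → R4 h) => (v.1 ∘ e2.symm, v.2 ∘ e4.symm)) '' C
      = rowSpan h (stdGenRows h A01b S T A01 A02 A12)

/-- The inner product
`⟨u,v⟩ = 2 ∑ᵢ ι(aᵢdᵢ) + ∑ⱼ bⱼeⱼ ∈ R₄` on `R₂^α × R₄^β`. -/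
def innerP (h : Z4[X]) {α β : Type*} [Fintype α] [Fintype β]
    (u v : (α → R2 h) × (β → R4 h)) : R4 h :=
  2 * ∑ i, iota h (u.1 i * v.1 i) + ∑ j, u.2 j * v.2 j

/-- The dual code `C⊥ = {v : ⟨u,v⟩ = 0 for all u ∈ C}`. -/
def dualCode (h : Z4[X]) {α β : Type*} [Fintype α] [Fintype β]
    (C : Set ((α → R2 h) × (β → R4 h))) : Set ((α → R2 h) × (β → R4 h)) :=
  {v | ∀ u ∈ C, innerP h u v = 0}

/-- The rows of the standard form parity-check matrix
`H = [[−Ā₀₁ᵀ, I_{r−k₀} | −2Sᵀ, 0, 0], [−Tᵀ, 0 | −A₀₂ᵀ + A₁₂ᵀA₀₁ᵀ, −A₁₂ᵀ, I_{s−k₁−k₂}],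
[0, 0 | −2A₀₁ᵀ, 2I_{k₂}, 0]]`. -/
def stdParityRows (h : Z4[X]) {r s k0 k1 k2 : ℕ}
    (A01b : Matrix (Fin k0) (Fin (r - k0)) (R2 h))
    (S : Matrix (Fin k1) (Fin (r - k0)) (R2 h))
    (T : Matrix (Fin k0) (Fin (s - k1 - k2)) (R4 h))
    (A01 : Matrix (Fin k1) (Fin k2) (R4 h))
    (A02 : Matrix (Fin k1) (Fin (s - k1 - k2)) (R4 h))
    (A12 : Matrix (Fin k2) (Fin (s - k1 - k2)) (R4 h)) :
    (Fin (r - k0) ⊕ Fin (s - k1 - k2) ⊕ Fin k2) →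
      ((Fin k0 ⊕ Fin (r - k0)) → R2 h) × ((Fin k1 ⊕ Fin k2 ⊕ Fin (s - k1 - k2)) → R4 h) :=
  fun row =>
    (fun col =>
      match row, col with
      | .inl i, .inl j => -(A01b j i)
      | .inl i, .inr j => if i = j then 1 else 0
      | .inr (.inl i), .inl j => -(barR h (T j i))
      | _, _ => 0,
     fun col =>
      match row, col with
      | .inl i, .inl j => -(2 * iota h (S j i))
      | .inr (.inl i), .inl j => -(A02 j i) + ∑ c, A12 c i * A01 j c
      | .inr (.inl i), .inr (.inl j) => -(A12 j i)
      | .inr (.inl i), .inr (.inr j) => if i = j then 1 else 0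
      | .inr (.inr i), .inl j => -(2 * A01 j i)
      | .inr (.inr i), .inr (.inl j) => if i = j then 2 else 0
      | _, _ => 0)

/-!
The map `a ↦ 2ι(a)` is an `R₄`-linear isomorphism of `R₂` onto `2R₄`, so the inner product is an
`R₄`-bilinear form and `C⊥` is the submodule of vectors orthogonal to the rows of `G`. The rows of
`H` are orthogonal to those of `G`. Conversely, for `v = (d₀, d₁ | e₀, e₁, e₂)` in `C⊥`, the third
block row of `G` gives `2(e₁ + A₁₂ e₂) = 0`, that is `e₁ + A₁₂ e₂ = 2z`. The combination of the rows
of `H` with coefficients `ι(d₁)`, `e₂`, `z` then agrees with `v` in the blocks `d₁`, `e₁`, `e₂`, and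
a vector of `C⊥` vanishing in these blocks is zero because of the identity blocks of `G`.
-/

lemma bar_natCast_val (a : Z2) : bar (a.val : Z4) = a := by
  revert a; decide

lemma bar_eq_zero_iff_two_dvd (a : Z4) : bar a = 0 ↔ 2 ∣ a := by
  revert a; decide

lemma two_mul_eq_zero_iff_bar_eq_zero (a : Z4) : 2 * a = 0 ↔ bar a = 0 := by
  revert a; decide

lemma map_bar_eq_zero_iff_two_dvd (p : Z4[X]) : p.map bar = 0 ↔ 2 ∣ p := by
  rw [← map_ofNat C 2, C_dvd_iff_dvd_coeff, Polynomial.ext_iff]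
  simp only [coeff_map, coeff_zero, bar_eq_zero_iff_two_dvd]

lemma two_mul_eq_zero_iff_map_bar_eq_zero (p : Z4[X]) : 2 * p = 0 ↔ p.map bar = 0 := by
  simp only [Polynomial.ext_iff, coeff_ofNat_mul, coeff_map, coeff_zero,
    ← two_mul_eq_zero_iff_bar_eq_zero]

lemma map_bar_sum_natCast_val (q : Z2[X]) :
    (q.sum fun i a => C (a.val : Z4) * X ^ i).map bar = q := by
  conv_rhs => rw [q.as_sum_support_C_mul_X_pow]
  simp only [Polynomial.sum_def, Polynomial.map_sum, Polynomial.map_mul, Polynomial.map_pow,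
    map_X, map_C, bar_natCast_val]

lemma barR_mk (h p : Z4[X]) :
    barR h (Ideal.Quotient.mk _ p) = Ideal.Quotient.mk _ (p.map bar) := rfl

lemma mk_rep2 (h : Z4[X]) (a : R2 h) : Ideal.Quotient.mk _ (rep2 h a) = a := by
  conv_rhs => rw [← Ideal.Quotient.mk_out a]
  rw [Ideal.Quotient.mk_eq_mk_iff_sub_mem, Ideal.mem_span_singleton]
  exact dvd_modByMonic_sub _ _

lemma barR_iota (h : Z4[X]) (a : R2 h) : barR h (iota h a) = a := by
  rw [iota, barR_mk, map_bar_sum_natCast_val, mk_rep2]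

lemma two_dvd_of_barR_eq_zero {h : Z4[X]} {x : R4 h} (hx : barR h x = 0) : 2 ∣ x := by
  obtain ⟨p, rfl⟩ := Ideal.Quotient.mk_surjective x
  rw [barR_mk, Ideal.Quotient.eq_zero_iff_dvd] at hx
  obtain ⟨q, hq⟩ := hx
  obtain ⟨q, rfl⟩ := Polynomial.map_surjective bar (ZMod.castHom_surjective _) q
  have hdvd : 2 ∣ p - h * q := by
    rw [← map_bar_eq_zero_iff_two_dvd, Polynomial.map_sub, hq, Polynomial.map_mul, sub_self]
  have hmk : Ideal.Quotient.mk (Ideal.span {h}) (p - h * q) = Ideal.Quotient.mk _ p :=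
    (Ideal.Quotient.mk_eq_mk_iff_sub_mem _ _).2 (Ideal.mem_span_singleton.2 ⟨-q, by ring⟩)
  rw [← hmk, ← map_ofNat (Ideal.Quotient.mk (Ideal.span {h})) 2]
  exact map_dvd _ hdvd

lemma four_eq_zero (h : Z4[X]) : (4 : R4 h) = 0 := by
  have four_eq_zero_Z4 : (OfNat.ofNat 4 : Z4) = 0 := rfl
  rw [← map_ofNat (algebraMap Z4 (R4 h)) 4, four_eq_zero_Z4, map_zero]

lemma two_mul_eq_two_mul_of_barR_eq {h : Z4[X]} {x y : R4 h} (hxy : barR h x = barR h y) :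
    2 * x = 2 * y := by
  obtain ⟨z, hz⟩ : 2 ∣ x - y := two_dvd_of_barR_eq_zero (by rw [map_sub, hxy, sub_self])
  linear_combination 2 * hz + z * four_eq_zero h

lemma barR_eq_zero_of_two_mul_eq_zero {h : Z4[X]} (hh : h.map bar ≠ 0) {x : R4 h}
    (hx : 2 * x = 0) : barR h x = 0 := by
  obtain ⟨p, rfl⟩ := Ideal.Quotient.mk_surjective x
  rw [← map_ofNat (Ideal.Quotient.mk (Ideal.span {h})) 2, ← map_mul,
    Ideal.Quotient.eq_zero_iff_dvd] at hx
  obtain ⟨q, hq⟩ := hx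
  have hhq : h.map bar * q.map bar = 0 := by
    rw [← Polynomial.map_mul, ← hq, map_bar_eq_zero_iff_two_dvd]
    exact dvd_mul_right 2 p
  obtain ⟨t, rfl⟩ := (map_bar_eq_zero_iff_two_dvd q).1 ((mul_eq_zero.1 hhq).resolve_left hh)
  have hp : (p - h * t).map bar = 0 := by
    rw [← two_mul_eq_zero_iff_map_bar_eq_zero]
    linear_combination hq
  rw [Polynomial.map_sub, Polynomial.map_mul, sub_eq_zero] at hp
  rw [barR_mk, Ideal.Quotient.eq_zero_iff_dvd, hp]
  exact dvd_mul_right _ _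

/-- The action `γ * a = γ̄ a` of `R₄` on `R₂`; it makes the scalar multiplication of
`R₂^α × R₄^β` agree with `smulStar`. -/
instance instAlgebraR4R2 (h : Z4[X]) : Algebra (R4 h) (R2 h) := (barR h).toAlgebra

lemma smul_eq_barR_mul {h : Z4[X]} (γ : R4 h) (a : R2 h) : γ • a = barR h γ * a := rfl

lemma rowSpan_eq_span (h : Z4[X]) {ι α β : Type*} [Fintype ι]
    (rows : ι → (α → R2 h) × (β → R4 h)) :
    rowSpan h rows = (Submodule.span (R4 h) (Set.range rows) : Set _) := by
  ext v
  rw [SetLike.mem_coe, Submodule.mem_span_range_iff_exists_fun]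
  exact exists_congr fun _ => eq_comm

/-- The map `a ↦ 2ι(a)` from `R₂` onto `2R₄`, through which the `R₂`-coordinates enter the
inner product. -/
def twoIota (h : Z4[X]) : R2 h →ₗ[R4 h] R4 h where
  toFun a := 2 * iota h a
  map_add' a b := by
    rw [← mul_add]
    exact two_mul_eq_two_mul_of_barR_eq (by simp only [map_add, barR_iota])
  map_smul' γ a := by
    rw [RingHom.id_apply, smul_eq_mul, mul_left_comm]
    exact two_mul_eq_two_mul_of_barR_eq (by simp only [map_mul, barR_iota, smul_eq_barR_mul])

lemma twoIota_apply (h : Z4[X]) (a : R2 h) : twoIota h a = 2 * iota h a := rfl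

lemma twoIota_barR (h : Z4[X]) (x : R4 h) : twoIota h (barR h x) = 2 * x :=
  two_mul_eq_two_mul_of_barR_eq (barR_iota h _)

lemma twoIota_injective {h : Z4[X]} (hh : h.map bar ≠ 0) : Function.Injective (twoIota h) := by
  rw [injective_iff_map_eq_zero]
  intro a ha
  rw [← barR_iota h a]
  exact barR_eq_zero_of_two_mul_eq_zero hh ha

section InnerForm

variable {α β : Type*} [Fintype α] [Fintype β]

lemma innerP_eq_sum_twoIota (h : Z4[X]) (u v : (α → R2 h) × (β → R4 h)) :
    innerP h u v = ∑ i, twoIota h (u.1 i * v.1 i) + ∑ j, u.2 j * v.2 j := by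
  rw [innerP, Finset.mul_sum]
  rfl

/-- The inner product `innerP` as an `R₄`-bilinear form, so that dual codes are orthogonal
submodules. -/
def innerForm (h : Z4[X]) (α β : Type*) [Fintype α] [Fintype β] :
    LinearMap.BilinForm (R4 h) ((α → R2 h) × (β → R4 h)) :=
  LinearMap.mk₂ (R4 h) (innerP h)
    (fun u u' v => by
      simp only [innerP_eq_sum_twoIota, Prod.fst_add, Prod.snd_add, Pi.add_apply, add_mul,
        map_add, Finset.sum_add_distrib]
      ring)
    (fun c u v => by
      simp only [innerP_eq_sum_twoIota, Prod.smul_fst, Prod.smul_snd, Pi.smul_apply,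
        smul_mul_assoc, map_smul, smul_add, Finset.smul_sum])
    (fun u v v' => by
      simp only [innerP_eq_sum_twoIota, Prod.fst_add, Prod.snd_add, Pi.add_apply, mul_add,
        map_add, Finset.sum_add_distrib]
      ring)
    (fun c u v => by
      simp only [innerP_eq_sum_twoIota, Prod.smul_fst, Prod.smul_snd, Pi.smul_apply,
        mul_smul_comm, map_smul, smul_add, Finset.smul_sum])

lemma innerForm_apply (h : Z4[X]) (u v : (α → R2 h) × (β → R4 h)) :
    innerForm h α β u v = ∑ i, twoIota h (u.1 i * v.1 i) + ∑ j, u.2 j * v.2 j :=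
  innerP_eq_sum_twoIota h u v

lemma dualCode_coe (h : Z4[X]) (N : Submodule (R4 h) ((α → R2 h) × (β → R4 h))) :
    dualCode h (N : Set ((α → R2 h) × (β → R4 h))) = (innerForm h α β).orthogonal N := rfl

end InnerForm

lemma mem_orthogonal_span_range_iff {R M ι : Type*} [CommRing R] [AddCommGroup M] [Module R M]
    (B : LinearMap.BilinForm R M) (f : ι → M) (v : M) :
    v ∈ B.orthogonal (Submodule.span R (Set.range f)) ↔ ∀ i, B (f i) v = 0 := by
  rw [LinearMap.BilinForm.mem_orthogonal_iff]
  change Submodule.span R (Set.range f) ≤ LinearMap.ker (B.flip v) ↔ _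
  rw [Submodule.span_le, Set.range_subset_iff]
  rfl

section StandardForm

variable {h : Z4[X]} {r s k0 k1 k2 : ℕ}
  (A01b : Matrix (Fin k0) (Fin (r - k0)) (R2 h))
  (S : Matrix (Fin k1) (Fin (r - k0)) (R2 h))
  (T : Matrix (Fin k0) (Fin (s - k1 - k2)) (R4 h))
  (A01 : Matrix (Fin k1) (Fin k2) (R4 h))
  (A02 : Matrix (Fin k1) (Fin (s - k1 - k2)) (R4 h))
  (A12 : Matrix (Fin k2) (Fin (s - k1 - k2)) (R4 h))
  (v : (Fin k0 ⊕ Fin (r - k0) → R2 h) × (Fin k1 ⊕ Fin k2 ⊕ Fin (s - k1 - k2) → R4 h))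

lemma innerForm_stdGenRows_inl (i : Fin k0) :
    innerForm h _ _ (stdGenRows h A01b S T A01 A02 A12 (.inl i)) v =
      twoIota h (v.1 (.inl i) + ∑ j, A01b i j * v.1 (.inr j)
        + ∑ j, barR h (T i j * v.2 (.inr (.inr j)))) := by
  simp only [map_add, map_sum, twoIota_barR]
  simp [innerForm_apply, stdGenRows, Fintype.sum_sum_type, apply_ite (twoIota h), mul_assoc]

lemma innerForm_stdGenRows_inr_inl (i : Fin k1) :
    innerForm h _ _ (stdGenRows h A01b S T A01 A02 A12 (.inr (.inl i))) v =
      ∑ j, twoIota h (S i j * v.1 (.inr j)) + v.2 (.inl i)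
        + ∑ j, A01 i j * v.2 (.inr (.inl j)) + ∑ j, A02 i j * v.2 (.inr (.inr j)) := by
  simp [innerForm_apply, stdGenRows, Fintype.sum_sum_type, add_assoc]

lemma innerForm_stdGenRows_inr_inr (i : Fin k2) :
    innerForm h _ _ (stdGenRows h A01b S T A01 A02 A12 (.inr (.inr i))) v =
      2 * (v.2 (.inr (.inl i)) + ∑ j, A12 i j * v.2 (.inr (.inr j))) := by
  simp [innerForm_apply, stdGenRows, Fintype.sum_sum_type, mul_add, Finset.mul_sum, mul_assoc]

lemma innerForm_stdGenRows_stdParityRows (i : Fin k0 ⊕ Fin k1 ⊕ Fin k2)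
    (j : Fin (r - k0) ⊕ Fin (s - k1 - k2) ⊕ Fin k2) :
    innerForm h _ _ (stdGenRows h A01b S T A01 A02 A12 i)
      (stdParityRows h A01b S T A01 A02 A12 j) = 0 := by
  rcases i with i | i | i
  · rw [innerForm_stdGenRows_inl]
    rcases j with j | j | j <;> simp [stdParityRows, apply_ite (barR h)]
  · rw [innerForm_stdGenRows_inr_inl]
    rcases j with j | j | j
    · simp [stdParityRows, ← twoIota_apply, apply_ite (twoIota h)]
    · have hneg : ∑ x, A01 i x * -(A12 x j) = -∑ x, A01 i x * A12 x j :=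
        dotProduct_neg (A01 i) fun x => A12 x j
      simp [stdParityRows, mul_comm (A12 _ j), hneg]
    · simp [stdParityRows, mul_comm]
  · rw [innerForm_stdGenRows_inr_inr]
    rcases j with j | j | j
    · simp [stdParityRows]
    · simp [stdParityRows]
    · have htwo : (2 * 2 : R4 h) = 0 := by linear_combination four_eq_zero h
      simp [stdParityRows, htwo]

lemma exists_mem_span_stdParityRows_eq_on_inr
    (hv : ∀ i, 2 ∣ v.2 (.inr (.inl i)) + ∑ j, A12 i j * v.2 (.inr (.inr j))) :
    ∃ w ∈ Submodule.span (R4 h) (Set.range (stdParityRows h A01b S T A01 A02 A12)),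
      (∀ j, w.1 (.inr j) = v.1 (.inr j)) ∧ ∀ j, w.2 (.inr j) = v.2 (.inr j) := by
  choose z hz using hv
  let c : Fin (r - k0) ⊕ Fin (s - k1 - k2) ⊕ Fin k2 → R4 h :=
    Sum.elim (fun j => iota h (v.1 (.inr j))) (Sum.elim (fun j => v.2 (.inr (.inr j))) z)
  refine ⟨∑ i, c i • stdParityRows h A01b S T A01 A02 A12 i,
    Submodule.sum_mem _ fun i _ => Submodule.smul_mem _ _ (Submodule.subset_span ⟨i, rfl⟩),
    fun j => ?_, ?_⟩
  · simp [c, Fintype.sum_sum_type, stdParityRows, Prod.fst_sum, smul_eq_barR_mul, barR_iota]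
  · rintro (j | j)
    · have hneg : ∑ x, v.2 (.inr (.inr x)) * -(A12 j x) = -∑ x, A12 j x * v.2 (.inr (.inr x)) := by
        simp_rw [mul_comm (A12 j _)]
        exact dotProduct_neg (fun x => v.2 (.inr (.inr x))) (A12 j)
      calc (∑ i, c i • stdParityRows h A01b S T A01 A02 A12 i).2 (.inr (.inl j))
          = -∑ x, A12 j x * v.2 (.inr (.inr x)) + z j * 2 := by
            simp [c, Fintype.sum_sum_type, stdParityRows, Prod.snd_sum, hneg]
        _ = v.2 (.inr (.inl j)) := by linear_combination - hz j
    · simp [c, Fintype.sum_sum_type, stdParityRows, Prod.snd_sum]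

variable {v} in
lemma eq_zero_of_innerForm_stdGenRows_eq_zero (hh : h.map bar ≠ 0)
    (hv : ∀ i, innerForm h _ _ (stdGenRows h A01b S T A01 A02 A12 i) v = 0)
    (hv₁ : ∀ j, v.1 (.inr j) = 0) (hv₂ : ∀ j, v.2 (.inr j) = 0) : v = 0 := by
  ext j <;> rcases j with i | j
  · apply twoIota_injective hh
    simpa [innerForm_stdGenRows_inl, hv₁, hv₂] using hv (.inl i)
  · exact hv₁ j
  · simpa [innerForm_stdGenRows_inr_inl, hv₁, hv₂] using hv (.inr (.inl i))
  · exact hv₂ _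

theorem dual_eq_span_of_parity_check_rows_general (hh : h.map bar ≠ 0) :
    dualCode h (rowSpan h (stdGenRows h A01b S T A01 A02 A12)) =
      rowSpan h (stdParityRows h A01b S T A01 A02 A12) := by
  rw [rowSpan_eq_span, rowSpan_eq_span, dualCode_coe, SetLike.coe_set_eq]
  have span_le : Submodule.span (R4 h) (Set.range (stdParityRows h A01b S T A01 A02 A12)) ≤
      (innerForm h _ _).orthogonal
        (Submodule.span (R4 h) (Set.range (stdGenRows h A01b S T A01 A02 A12))) := by
    rw [Submodule.span_le, Set.range_subset_iff]
    intro j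
    exact (mem_orthogonal_span_range_iff _ _ _).2 fun i =>
      innerForm_stdGenRows_stdParityRows A01b S T A01 A02 A12 i j
  refine le_antisymm (fun v hv => ?_) span_le
  have hdvd (i) : 2 ∣ v.2 (.inr (.inl i)) + ∑ j, A12 i j * v.2 (.inr (.inr j)) := by
    apply two_dvd_of_barR_eq_zero (barR_eq_zero_of_two_mul_eq_zero hh _)
    rw [← innerForm_stdGenRows_inr_inr A01b S T A01 A02 A12]
    exact (mem_orthogonal_span_range_iff _ _ _).1 hv _
  obtain ⟨w, hw, hw₁, hw₂⟩ :=
    exists_mem_span_stdParityRows_eq_on_inr A01b S T A01 A02 A12 v hdvd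
  have hvw : v - w = 0 := eq_zero_of_innerForm_stdGenRows_eq_zero A01b S T A01 A02 A12 hh
    ((mem_orthogonal_span_range_iff _ _ _).1 (sub_mem hv (span_le hw)))
    (fun j => sub_eq_zero.2 (hw₁ j).symm) fun j => sub_eq_zero.2 (hw₂ j).symm
  rwa [sub_eq_zero.1 hvw]

end StandardForm

/-- If `C` has standard form generator matrix `G`, then the dual code
`C⊥` is exactly the `R₄`-span of the rows of the standard form parity-check matrix `H`. -/
theorem dual_eq_span_of_parity_check_rows
    (m : ℕ) (hm : 1 ≤ m) (h : Z4[X]) (hbp : BasicPrimitive h m)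
    (r s k0 k1 k2 : ℕ) (hk0 : k0 ≤ r) (hk12 : k1 + k2 ≤ s)
    (A01b : Matrix (Fin k0) (Fin (r - k0)) (R2 h))
    (S : Matrix (Fin k1) (Fin (r - k0)) (R2 h))
    (T : Matrix (Fin k0) (Fin (s - k1 - k2)) (R4 h))
    (A01 : Matrix (Fin k1) (Fin k2) (R4 h))
    (A02 : Matrix (Fin k1) (Fin (s - k1 - k2)) (R4 h))
    (A12 : Matrix (Fin k2) (Fin (s - k1 - k2)) (R4 h))
    (C : Set (((Fin k0 ⊕ Fin (r - k0)) → R2 h) ×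
              ((Fin k1 ⊕ Fin k2 ⊕ Fin (s - k1 - k2)) → R4 h)))
    (hC : C = rowSpan h (stdGenRows h A01b S T A01 A02 A12)) :
    dualCode h C = rowSpan h (stdParityRows h A01b S T A01 A02 A12) := by
  subst hC
  exact dual_eq_span_of_parity_check_rows_general A01b S T A01 A02 A12 (hbp.1.map bar).ne_zero
end
end

section
/- Let C be a skew cyclic code of length s over R₄ and suppose C contains no monic skew polynomial. Then C = ⟨2q(x)⟩ as a left R₄[x,θ₄]-submodule of R₄[x,θ₄]/⟨x^s−1⟩, for some skew polynomial q(x) whose mod-2 reduction is a right divisor of x^s−1 in R₂[x,θ₂]. -/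
set_option synthInstance.maxHeartbeats 1000000
set_option maxHeartbeats 2000000

noncomputable section
open Polynomial

/-! ### Skew polynomial rings -/

/-- The additive endomorphism `p(x) ↦ pᶿ(x)·x` of `A[x]` (the twisted shift). -/
def Tmap {A : Type*} [CommRing A] (θ : A →+* A) : AddMonoid.End (Polynomial A) :=
  (AddMonoidHom.mulRight (X : Polynomial A)).comp (Polynomial.mapRingHom θ).toAddMonoidHom

/-- Left multiplication by the constant `a`, as an additive endomorphism of `A[x]`. -/
def Lmap {A : Type*} [CommRing A] (a : A) : AddMonoid.End (Polynomial A) :=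
  AddMonoidHom.mulLeft (C a)

/-- The skew polynomial ring `A[x;θ]`, realized as the subring of additive
endomorphisms of `A[x]` generated by the constants (acting by left multiplication)
and the twisted shift `Tmap θ`.  In this model multiplication is composition, so
`(a·xᵏ)·(b·xʲ) = a θᵏ(b) x^{k+j}`, i.e. `x·a = θ(a)·x`. -/
def SkewPolySubring (A : Type*) [CommRing A] (θ : A →+* A) :
    Subring (AddMonoid.End (Polynomial A)) :=
  Subring.closure ((Set.range (Lmap (A := A))) ∪ {Tmap θ})

/-- The skew polynomial ring `A[x;θ]` as a type. -/
abbrev Skew (A : Type*) [CommRing A] (θ : A →+* A) : Type _ := SkewPolySubring A θ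

/-- The element `x` of `A[x;θ]`. -/
def xSkew (A : Type*) [CommRing A] (θ : A →+* A) : Skew A θ :=
  ⟨Tmap θ, Subring.subset_closure (Set.mem_union_right _ rfl)⟩

/-- The constant `a` as an element of `A[x;θ]`. -/
def cSkew {A : Type*} [CommRing A] (θ : A →+* A) (a : A) : Skew A θ :=
  ⟨Lmap a, Subring.subset_closure (Set.mem_union_left _ ⟨a, rfl⟩)⟩

/-- The skew polynomial `∑ aᵢ xⁱ ∈ A[x;θ]` attached to coefficient data `p = ∑ aᵢ Xⁱ`. -/
def ofPoly {A : Type*} [CommRing A] (θ : A →+* A) (p : Polynomial A) : Skew A θ :=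
  p.sum fun i a => cSkew θ a * xSkew A θ ^ i

/-- The coefficient data of a skew polynomial, recovered by applying the
endomorphism to the polynomial `1`. -/
def toPoly {A : Type*} [CommRing A] {θ : A →+* A} (f : Skew A θ) : Polynomial A :=
  (f : AddMonoid.End (Polynomial A)) 1

/-- `g |ᵣ p` : `g` is a right divisor of `p` in `A[x;θ]`, i.e. `p = u·g`. -/
def RDvd {A : Type*} [CommRing A] {θ : A →+* A} (g p : Skew A θ) : Prop :=
  ∃ u : Skew A θ, p = u * g

/-- The left ideal `⟨x^n - 1⟩` of `A[x;θ]`. -/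
def skewIdeal (A : Type*) [CommRing A] (θ : A →+* A) (n : ℕ) :
    Submodule (Skew A θ) (Skew A θ) :=
  Submodule.span (Skew A θ) {xSkew A θ ^ n - 1}

/-- The quotient left `A[x;θ]`-module `A[x;θ]/⟨x^n-1⟩`. -/
abbrev SkewQuot (A : Type*) [CommRing A] (θ : A →+* A) (n : ℕ) : Type _ :=
  Skew A θ ⧸ skewIdeal A θ n

/-- The polynomial `c₀ + c₁X + ⋯ + c_{n-1}X^{n-1}` attached to a word `c ∈ Aⁿ`. -/
def wordPoly {A : Type*} [CommRing A] {n : ℕ} (c : Fin n → A) : Polynomial A :=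
  ∑ i : Fin n, C (c i) * X ^ (i : ℕ)

/-- Identify the word `c ∈ Aⁿ` with the class of `∑ cᵢ xⁱ` in `A[x;θ]/⟨x^n-1⟩`. -/
def wordToQuot {A : Type*} [CommRing A] (θ : A →+* A) {n : ℕ} (c : Fin n → A) :
    SkewQuot A θ n :=
  Submodule.Quotient.mk (ofPoly θ (wordPoly c))

/-- A linear code of length `n` over `A`: an `A`-submodule of `Aⁿ`, as a set. -/
def IsLinearCode (A : Type*) [CommRing A] {n : ℕ} (C : Set (Fin n → A)) : Prop :=
  0 ∈ C ∧ (∀ u ∈ C, ∀ v ∈ C, u + v ∈ C) ∧ ∀ γ : A, ∀ u ∈ C, γ • u ∈ C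

/-- The `θ`-cyclic shift `(c₀,…,c_{n-1}) ↦ (θ(c_{n-1}),θ(c₀),…,θ(c_{n-2}))`. -/
def skewShift {A : Type*} [CommRing A] (θ : A →+* A) {n : ℕ} [NeZero n]
    (c : Fin n → A) : Fin n → A :=
  fun i => θ (c (i - 1))

/-!
Let `ϖ` generate the maximal ideal of `A`, with `ϖ² = 0` and residue field `K`. If some
coordinate of a codeword were a unit, shifting it to the last position and scaling would give a
monic codeword; so without monic codewords every codeword is `ϖ` times a word. Multiplication
by `ϖ` only depends on residues, hence the code is determined by its torsion code, the left
`K[x;θ]`-module of all residues `f̄` with `ϖ f` in the code. Right division with remainder over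
the field `K` shows that this module is generated by one element `q̄`, and since it contains
`x^s - 1`, that generator is a right divisor of `x^s - 1`.
-/

/-! ### Skew polynomials acting on ordinary polynomials -/

namespace Skew

section Action

variable {A : Type*} [CommRing A] {θ : A →+* A}

lemma cSkew_smul (a : A) (p : A[X]) : cSkew θ a • p = C a * p := rfl

lemma xSkew_smul (p : A[X]) : xSkew A θ • p = p.map θ * X := rfl

lemma ext_smul {f g : Skew A θ} (hfg : ∀ p : A[X], f • p = g • p) : f = g :=
  Subtype.ext (DFunLike.ext _ _ hfg)

lemma cSkew_zero : cSkew θ (0 : A) = 0 := ext_smul fun p ↦ by simp [cSkew_smul]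

lemma cSkew_one : cSkew θ (1 : A) = 1 := ext_smul fun p ↦ by simp [cSkew_smul]

lemma cSkew_neg (a : A) : cSkew θ (-a) = -cSkew θ a := ext_smul fun p ↦ by
  simp [cSkew_smul, neg_smul]

lemma cSkew_add (a b : A) : cSkew θ (a + b) = cSkew θ a + cSkew θ b := ext_smul fun p ↦ by
  simp [cSkew_smul, add_smul, add_mul]

lemma cSkew_mul (a b : A) : cSkew θ (a * b) = cSkew θ a * cSkew θ b := ext_smul fun p ↦ by
  simp [cSkew_smul, mul_smul, mul_assoc]

lemma xSkew_mul_cSkew (a : A) : xSkew A θ * cSkew θ a = cSkew θ (θ a) * xSkew A θ :=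
  ext_smul fun p ↦ by simp [cSkew_smul, xSkew_smul, mul_smul, mul_assoc]

@[elab_as_elim]
lemma induction_on {motive : Skew A θ → Prop} (r : Skew A θ)
    (const : ∀ a, motive (cSkew θ a)) (x : motive (xSkew A θ))
    (add : ∀ r t, motive r → motive t → motive (r + t))
    (mul : ∀ r t, motive r → motive t → motive (r * t)) : motive r := by
  obtain ⟨r, hr⟩ := r
  induction hr using Subring.closure_induction with
  | mem r hr =>
    rcases hr with ⟨a, rfl⟩ | rfl
    · exact const a
    · exact x
  | zero => exact cast (congrArg motive cSkew_zero) (const 0)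
  | one => exact cast (congrArg motive cSkew_one) (const 1)
  | add r t _ _ hr ht => exact add _ _ hr ht
  | mul r t _ _ hr ht => exact mul _ _ hr ht
  | neg r hr ihr =>
    have hneg : cSkew θ (-1) * ⟨r, hr⟩ = -⟨r, hr⟩ := by rw [cSkew_neg, cSkew_one, neg_one_mul]
    exact cast (congrArg motive hneg) (mul _ _ (const (-1)) ihr)

/-- The left `A[x;θ]`-submodule carried by an additive submonoid that is stable under the generators
of `A[x;θ]`, namely the constants and `x`. -/
def submoduleOfStable {M : Type*} [AddCommGroup M] [Module (Skew A θ) M] (S : AddSubmonoid M)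
    (hconst : ∀ a, ∀ v ∈ S, cSkew θ a • v ∈ S) (hx : ∀ v ∈ S, xSkew A θ • v ∈ S) :
    Submodule (Skew A θ) M where
  toAddSubmonoid := S
  smul_mem' r v hv := by
    induction r using Skew.induction_on generalizing v with
    | const a => exact hconst a v hv
    | x => exact hx v hv
    | add r t hr ht => exact add_smul r t v ▸ S.add_mem (hr v hv) (ht v hv)
    | mul r t hr ht => exact mul_smul r t v ▸ hr _ (ht v hv)

lemma ofPoly_C_mul_X_pow (a : A) (n : ℕ) :
    ofPoly θ (C a * X ^ n) = cSkew θ a * xSkew A θ ^ n := by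
  rw [ofPoly, C_mul_X_pow_eq_monomial, sum_monomial_index _ _ (by rw [cSkew_zero, zero_mul])]

lemma ofPoly_add (p q : A[X]) : ofPoly θ (p + q) = ofPoly θ p + ofPoly θ q :=
  sum_add_index _ _ _ (fun i ↦ by rw [cSkew_zero, zero_mul])
    (fun i a b ↦ by rw [cSkew_add, add_mul])

lemma ofPoly_C_mul (a : A) (p : A[X]) : ofPoly θ (C a * p) = cSkew θ a * ofPoly θ p := by
  induction p using Polynomial.induction_on' with
  | add p q hp hq => rw [mul_add, ofPoly_add, hp, hq, ofPoly_add, mul_add]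
  | monomial n b =>
    rw [← C_mul_X_pow_eq_monomial, ← mul_assoc, ← C_mul, ofPoly_C_mul_X_pow, ofPoly_C_mul_X_pow,
      cSkew_mul, mul_assoc]

lemma ofPoly_map_mul_X (p : A[X]) : ofPoly θ (p.map θ * X) = xSkew A θ * ofPoly θ p := by
  induction p using Polynomial.induction_on' with
  | add p q hp hq => rw [Polynomial.map_add, add_mul, ofPoly_add, hp, hq, ofPoly_add, mul_add]
  | monomial n b =>
    rw [← C_mul_X_pow_eq_monomial, Polynomial.map_mul, Polynomial.map_pow, map_C, map_X,
      mul_assoc, ← pow_succ, ofPoly_C_mul_X_pow, ofPoly_C_mul_X_pow, ← mul_assoc,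
      xSkew_mul_cSkew, mul_assoc, ← pow_succ']

lemma ofPoly_smul (r : Skew A θ) (p : A[X]) : ofPoly θ (r • p) = r * ofPoly θ p := by
  induction r using Skew.induction_on generalizing p with
  | const a => exact ofPoly_C_mul a p
  | x => exact ofPoly_map_mul_X p
  | add r t hr ht => rw [add_smul, ofPoly_add, hr, ht, add_mul]
  | mul r t hr ht => rw [mul_smul, hr, ht, mul_assoc]

variable (θ) in
/-- `ofPoly` as a homomorphism of left `A[x;θ]`-modules, for the tautological action of `A[x;θ]` on
`A[X]`. It turns submodules of `A[X]` into left ideals of `A[x;θ]`. -/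
def ofPolyLinear : A[X] →ₗ[Skew A θ] Skew A θ where
  toFun := ofPoly θ
  map_add' := ofPoly_add
  map_smul' := ofPoly_smul

lemma ofPoly_sub (p q : A[X]) : ofPoly θ (p - q) = ofPoly θ p - ofPoly θ q :=
  map_sub (ofPolyLinear θ) p q

lemma ofPoly_X_pow_sub_one (n : ℕ) : ofPoly θ (X ^ n - 1) = xSkew A θ ^ n - 1 := by
  have hpow (k : ℕ) : ofPoly θ (X ^ k) = xSkew A θ ^ k := by
    simpa [cSkew_one] using ofPoly_C_mul_X_pow (θ := θ) 1 k
  rw [← pow_zero (X : A[X]), ofPoly_sub, hpow, hpow, pow_zero]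

variable (θ) in
/-- The class of a skew polynomial in `A[x;θ]/⟨x^n - 1⟩` as a linear function of its coefficient
data. -/
def quotOfPoly (n : ℕ) : A[X] →ₗ[Skew A θ] SkewQuot A θ n :=
  (skewIdeal A θ n).mkQ ∘ₗ ofPolyLinear θ

lemma quotOfPoly_X_pow_sub_one (n : ℕ) : quotOfPoly θ n (X ^ n - 1) = 0 := by
  have hmem : ofPoly θ (X ^ n - 1) ∈ skewIdeal A θ n := by
    rw [ofPoly_X_pow_sub_one]
    exact Submodule.mem_span_singleton_self _
  exact (Submodule.Quotient.mk_eq_zero _).2 hmem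

end Action

/-! ### Right division over a field -/

section Field

variable {K : Type*} [Field K] {θ : K →+* K}

lemma degree_xSkew_pow_smul (n : ℕ) (p : K[X]) : (xSkew K θ ^ n • p).degree = p.degree + n := by
  induction n with
  | zero => simp
  | succ n ih =>
    rw [pow_succ', mul_smul, xSkew_smul, degree_mul_X, degree_map, ih, Nat.cast_succ, add_assoc]

lemma exists_degree_sub_smul_lt_self {f g : K[X]} (hg : g ≠ 0) (hgf : g.degree ≤ f.degree) :
    ∃ r : Skew K θ, (f - r • g).degree < f.degree := by
  have hf : f ≠ 0 := by
    rintro rfl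
    exact hg (degree_eq_bot.1 (le_bot_iff.1 hgf))
  set t := xSkew K θ ^ (f.natDegree - g.natDegree) • g with ht
  have htf : t.degree = f.degree := by
    rw [ht, degree_xSkew_pow_smul, degree_eq_natDegree hg, degree_eq_natDegree hf, ← Nat.cast_add,
      Nat.add_sub_cancel' (natDegree_le_natDegree hgf)]
  have ht0 : t.leadingCoeff ≠ 0 := by
    rw [leadingCoeff_ne_zero, ← degree_ne_bot, htf, degree_ne_bot]
    exact hf
  have ha : f.leadingCoeff / t.leadingCoeff ≠ 0 := div_ne_zero (leadingCoeff_ne_zero.2 hf) ht0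
  refine ⟨cSkew θ (f.leadingCoeff / t.leadingCoeff) * xSkew K θ ^ (f.natDegree - g.natDegree), ?_⟩
  rw [mul_smul, cSkew_smul]
  refine degree_sub_lt_left ?_ hf ?_
  · rw [degree_C_mul ha, htf]
  · rw [leadingCoeff_mul, leadingCoeff_C, div_mul_cancel₀ _ ht0]

lemma exists_degree_sub_smul_lt {g : K[X]} (hg : g ≠ 0) (f : K[X]) :
    ∃ r : Skew K θ, (f - r • g).degree < g.degree := by
  induction f using degree_lt_wf.induction with
  | _ f ih =>
    rcases lt_or_ge f.degree g.degree with hfg | hgf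
    · exact ⟨0, by simpa using hfg⟩
    · obtain ⟨r, hr⟩ := exists_degree_sub_smul_lt_self (θ := θ) hg hgf
      obtain ⟨t, ht⟩ := ih _ hr
      exact ⟨r + t, by rwa [add_smul, ← sub_sub]⟩

lemma isPrincipal (J : Submodule (Skew K θ) K[X]) : J.IsPrincipal := by
  rcases eq_or_ne J ⊥ with rfl | hJ
  · exact bot_isPrincipal
  obtain ⟨g, ⟨hgJ, hg⟩, hmin⟩ := degree_lt_wf.has_min {g : K[X] | g ∈ J ∧ g ≠ 0}
    (J.exists_mem_ne_zero_of_ne_bot hJ)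
  refine ⟨g, le_antisymm (fun f hf ↦ ?_) ((Submodule.span_singleton_le_iff_mem ..).2 hgJ)⟩
  obtain ⟨r, hr⟩ := exists_degree_sub_smul_lt (θ := θ) hg f
  have hremainder : f - r • g = 0 := by
    by_contra hne
    exact hmin _ ⟨J.sub_mem hf (J.smul_mem r hgJ), hne⟩ hr
  exact Submodule.mem_span_singleton.2 ⟨r, (sub_eq_zero.1 hremainder).symm⟩

end Field

/-! ### Torsion modules -/

section Torsion

variable {A K : Type*} [CommRing A] [CommRing K] {θ : A →+* A} {θK : K →+* K} {π : A →+* K} {ϖ : A}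

lemma C_mul_eq_of_map_eq (hker : RingHom.ker π = Ideal.span {ϖ}) (hϖ : ϖ ^ 2 = 0)
    {p q : A[X]} (hpq : p.map π = q.map π) : C ϖ * p = C ϖ * q := by
  ext i
  have hmem : p.coeff i - q.coeff i ∈ RingHom.ker π := by
    rw [RingHom.mem_ker, map_sub, ← coeff_map, ← coeff_map, hpq, sub_self]
  rw [hker, Ideal.mem_span_singleton'] at hmem
  obtain ⟨b, hb⟩ := hmem
  rw [coeff_C_mul, coeff_C_mul]
  linear_combination b * hϖ - ϖ * hb

/-- The torsion module of `P`: the reductions of the skew polynomials `q` with `ϖ q ∈ P`. For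
`ϖ = 2` and `P` the preimage of a code over `R₄`, this is the torsion code over `R₂`. -/
def torsion (hπ : Function.Surjective π) (hθϖ : θ ϖ = ϖ) (hθ : π.comp θ = θK.comp π)
    (P : Submodule (Skew A θ) A[X]) : Submodule (Skew K θK) K[X] :=
  submoduleOfStable
    ((P.toAddSubmonoid.comap (AddMonoidHom.mulLeft (C ϖ))).map (mapRingHom π : A[X] →+ K[X]))
    (by
      rintro a _ ⟨q, hq, rfl⟩
      obtain ⟨b, rfl⟩ := hπ a
      refine ⟨C b * q, ?_, by simp [cSkew_smul]⟩
      simpa [cSkew_smul, mul_left_comm] using P.smul_mem (cSkew θ b) hq)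
    (by
      rintro _ ⟨q, hq, rfl⟩
      refine ⟨q.map θ * X, ?_, by simp [xSkew_smul, Polynomial.map_map, hθ]⟩
      simpa [xSkew_smul, hθϖ, mul_assoc] using P.smul_mem (xSkew A θ) hq)

variable (hπ : Function.Surjective π) (hθϖ : θ ϖ = ϖ) (hθ : π.comp θ = θK.comp π)
  (P : Submodule (Skew A θ) A[X])

lemma map_mem_torsion_iff (hker : RingHom.ker π = Ideal.span {ϖ}) (hϖ : ϖ ^ 2 = 0) (q : A[X]) :
    q.map π ∈ torsion hπ hθϖ hθ P ↔ C ϖ * q ∈ P := by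
  refine ⟨?_, fun hq ↦ ⟨q, hq, rfl⟩⟩
  rintro ⟨p, hp, hpq⟩
  exact C_mul_eq_of_map_eq hker hϖ hpq ▸ hp

lemma C_mul_mem_span_of_torsion_eq_span (hker : RingHom.ker π = Ideal.span {ϖ}) (hϖ : ϖ ^ 2 = 0)
    {q : A[X]} (hq : torsion hπ hθϖ hθ P = Submodule.span (Skew K θK) {q.map π}) {p : A[X]}
    (hp : C ϖ * p ∈ P) : C ϖ * p ∈ Submodule.span (Skew A θ) {C ϖ * q} := by
  have hle : torsion hπ hθϖ hθ P ≤ torsion hπ hθϖ hθ (Submodule.span (Skew A θ) {C ϖ * q}) := by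
    rw [hq, Submodule.span_singleton_le_iff_mem, map_mem_torsion_iff (hker := hker) (hϖ := hϖ)]
    exact Submodule.mem_span_singleton_self _
  rw [← map_mem_torsion_iff hπ hθϖ hθ _ hker hϖ] at hp ⊢
  exact hle hp

end Torsion

end Skew

/-! ### Skew cyclic codes -/

section Code

variable {A : Type*} [CommRing A] {n : ℕ}

lemma coeff_wordPoly (c : Fin n → A) (i : Fin n) : (wordPoly c).coeff i = c i := by
  simp [wordPoly, coeff_X_pow, Fin.val_inj]

lemma natDegree_wordPoly_le (c : Fin n → A) : (wordPoly c).natDegree ≤ n - 1 :=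
  natDegree_sum_le_of_forall_le _ _ fun _ _ ↦ (natDegree_C_mul_X_pow_le _ _).trans (by lia)

lemma wordPoly_zero : wordPoly (0 : Fin n → A) = 0 := by simp [wordPoly]

lemma wordPoly_add (c d : Fin n → A) : wordPoly (c + d) = wordPoly c + wordPoly d := by
  simp [wordPoly, add_mul, Finset.sum_add_distrib]

lemma wordPoly_smul (a : A) (c : Fin n → A) : wordPoly (a • c) = C a * wordPoly c := by
  simp [wordPoly, Finset.mul_sum, mul_assoc]

variable [NeZero n] {θ : A →+* A}

lemma map_wordPoly_mul_X (c : Fin n → A) :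
    (wordPoly c).map θ * X = wordPoly (skewShift θ c) + C (θ (c (-1))) * (X ^ n - 1) := by
  obtain _ | t := n
  · exact absurd rfl (NeZero.ne 0)
  have hlast : (-1 : Fin (t + 1)) = Fin.last t := Fin.ext Fin.coe_neg_one
  have hzero : skewShift θ c 0 = θ (c (Fin.last t)) := by simp [skewShift, hlast]
  have hsucc (i : Fin t) : skewShift θ c i.succ = θ (c i.castSucc) := by
    simp [skewShift, ← Fin.coeSucc_eq_succ]
  rw [wordPoly, wordPoly, Fin.sum_univ_castSucc, Fin.sum_univ_succ (n := t)]
  simp only [hzero, hsucc, Polynomial.map_add, Polynomial.map_sum, Polynomial.map_mul, map_C,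
    Polynomial.map_pow, map_X, Fin.val_succ, Fin.val_castSucc, Fin.val_last, Fin.val_zero, add_mul,
    Finset.sum_mul, pow_succ, mul_assoc, hlast]
  ring

lemma wordToQuot_skewShift (c : Fin n → A) :
    wordToQuot θ (skewShift θ c) = xSkew A θ • wordToQuot θ c := by
  have hshift := congrArg (Skew.quotOfPoly θ n) (map_wordPoly_mul_X (θ := θ) c)
  rw [← Skew.xSkew_smul, map_smul, map_add, ← Skew.cSkew_smul (θ := θ), map_smul,
    Skew.quotOfPoly_X_pow_sub_one, smul_zero, add_zero] at hshift
  exact hshift.symm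

variable {D : Set (Fin n → A)}

/-- A skew cyclic code, viewed as a left `A[x;θ]`-submodule of `A[x;θ]/⟨x^n - 1⟩`. -/
def codeSubmodule (hlin : IsLinearCode A D) (hcyc : ∀ c ∈ D, skewShift θ c ∈ D) :
    Submodule (Skew A θ) (SkewQuot A θ n) :=
  Skew.submoduleOfStable
    { carrier := wordToQuot θ '' D
      zero_mem' := ⟨0, hlin.1, by
        exact (congrArg (Skew.quotOfPoly θ n) wordPoly_zero).trans (map_zero _)⟩
      add_mem' := by
        rintro _ _ ⟨c, hc, rfl⟩ ⟨d, hd, rfl⟩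
        exact ⟨c + d, hlin.2.1 c hc d hd,
          (congrArg (Skew.quotOfPoly θ n) (wordPoly_add c d)).trans (map_add _ _ _)⟩ }
    (by
      rintro a _ ⟨c, hc, rfl⟩
      exact ⟨a • c, hlin.2.2 a c hc,
        (congrArg (Skew.quotOfPoly θ n) (wordPoly_smul a c)).trans
          (map_smul _ (cSkew θ a) (wordPoly c))⟩)
    (by
      rintro _ ⟨c, hc, rfl⟩
      exact ⟨skewShift θ c, hcyc c hc, wordToQuot_skewShift c⟩)

open scoped Fin.NatCast Fin.CommRing in
lemma exists_mem_isUnit_apply (hcyc : ∀ c ∈ D, skewShift θ c ∈ D) {c : Fin n → A} (hc : c ∈ D)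
    {i : Fin n} (hi : IsUnit (c i)) (j : Fin n) : ∃ d ∈ D, IsUnit (d j) := by
  suffices hshift : ∀ k : ℕ, ∃ d ∈ D, IsUnit (d (i + k)) by
    simpa using hshift (j - i : Fin n).val
  intro k
  induction k with
  | zero => exact ⟨c, hc, by simpa using hi⟩
  | succ k ih =>
    obtain ⟨d, hd, hu⟩ := ih
    exact ⟨skewShift θ d, hcyc d hd, by simpa [skewShift, ← add_assoc] using hu.map θ⟩

lemma monic_wordPoly_of_apply_neg_one {c : Fin n → A} (hc : c (-1) = 1) : (wordPoly c).Monic := by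
  obtain _ | t := n
  · exact absurd rfl (NeZero.ne 0)
  refine monic_of_natDegree_le_of_coeff_eq_one t (natDegree_wordPoly_le c) ?_
  rw [← hc, ← coeff_wordPoly c, Fin.coe_neg_one]

lemma exists_mem_monic_wordPoly (hlin : IsLinearCode A D) (hcyc : ∀ c ∈ D, skewShift θ c ∈ D)
    {c : Fin n → A} (hc : c ∈ D) {i : Fin n} (hi : IsUnit (c i)) :
    ∃ d ∈ D, (wordPoly d).Monic := by
  obtain ⟨d, hd, hu⟩ := exists_mem_isUnit_apply hcyc hc hi (-1)
  obtain ⟨b, hb⟩ := hu.exists_left_inv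
  exact ⟨b • d, hlin.2.2 b d hd, monic_wordPoly_of_apply_neg_one hb⟩

end Code

/-! ### Codes over a ring with square-zero maximal ideal -/

section SquareZero

lemma isLocalHom_of_forall_mem_ker_isNilpotent {A B : Type*} [CommRing A] [CommRing B] {f : A →+* B}
    (hf : Function.Surjective f) (hker : ∀ a ∈ RingHom.ker f, IsNilpotent a) : IsLocalHom f where
  map_nonunit a ha := by
    obtain ⟨b, hb⟩ := ha.exists_right_inv
    obtain ⟨b, rfl⟩ := hf b
    have hnil : IsNilpotent (a * b - 1) := hker _ (by
      rw [RingHom.mem_ker, map_sub, map_mul, hb, map_one, sub_self])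
    have hab : IsUnit (a * b) := by simpa using hnil.isUnit_one_add
    exact isUnit_of_mul_isUnit_left hab

variable {A K : Type*} [CommRing A] [Field K] {π : A →+* K} {ϖ : A}

lemma exists_wordPoly_eq_C_mul {n : ℕ} [NeZero n] {θ : A →+* A} {D : Set (Fin n → A)}
    (hπ : Function.Surjective π) (hker : RingHom.ker π = Ideal.span {ϖ}) (hϖ : ϖ ^ 2 = 0)
    (hlin : IsLinearCode A D) (hcyc : ∀ c ∈ D, skewShift θ c ∈ D)
    (hnomonic : ¬ ∃ c ∈ D, (wordPoly c).Monic) {c : Fin n → A} (hc : c ∈ D) :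
    ∃ p : A[X], wordPoly c = C ϖ * p := by
  have hnil : ∀ a ∈ RingHom.ker π, IsNilpotent a := by
    intro a ha
    obtain ⟨b, rfl⟩ := Ideal.mem_span_singleton'.1 (hker ▸ ha)
    exact ⟨2, by rw [mul_pow, hϖ, mul_zero]⟩
  have := isLocalHom_of_forall_mem_ker_isNilpotent hπ hnil
  have hdvd (i : Fin n) : ϖ ∣ c i := by
    rw [← Ideal.mem_span_singleton, ← hker, RingHom.mem_ker]
    by_contra hne
    exact hnomonic (exists_mem_monic_wordPoly hlin hcyc hc (.of_map π (c i) (.mk0 _ hne)))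
  choose d hd using hdvd
  obtain rfl : c = ϖ • d := funext hd
  exact ⟨wordPoly d, wordPoly_smul ϖ d⟩

theorem skew_cyclic_no_monic_generator_general {θ : A →+* A} {θK : K →+* K}
    (hπ : Function.Surjective π) (hker : RingHom.ker π = Ideal.span {ϖ}) (hϖ : ϖ ^ 2 = 0)
    (hθϖ : θ ϖ = ϖ) (hθ : π.comp θ = θK.comp π) {s : ℕ} [NeZero s] {D : Set (Fin s → A)}
    (hlin : IsLinearCode A D) (hcyc : ∀ c ∈ D, skewShift θ c ∈ D)
    (hnomonic : ¬ ∃ c ∈ D, (wordPoly c).Monic) :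
    ∃ q : A[X],
      RDvd (ofPoly θK (q.map π)) (xSkew K θK ^ s - 1) ∧
      wordToQuot θ '' D =
        ↑(Submodule.span (Skew A θ)
          {(Submodule.Quotient.mk (p := skewIdeal A θ s) (ofPoly θ (C ϖ * q)))}) := by
  let Q := codeSubmodule hlin hcyc
  let P := Q.comap (Skew.quotOfPoly θ s)
  obtain ⟨g, hg⟩ := Skew.isPrincipal (Skew.torsion hπ hθϖ hθ P)
  obtain ⟨q, rfl⟩ := map_surjective π hπ g
  have hmem (p : A[X]) := Skew.map_mem_torsion_iff hπ hθϖ hθ P hker hϖ p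
  refine ⟨q, ?_, Set.Subset.antisymm ?_ ?_⟩
  · have hX : (X ^ s - 1 : A[X]).map π ∈ Skew.torsion hπ hθϖ hθ P := by
      rw [hmem, ← Skew.cSkew_smul (θ := θ)]
      refine P.smul_mem _ ?_
      rw [Submodule.mem_comap, Skew.quotOfPoly_X_pow_sub_one]
      exact Q.zero_mem
    obtain ⟨u, hu⟩ := Submodule.mem_span_singleton.1 (hg ▸ hX)
    refine ⟨u, ?_⟩
    rw [← Skew.ofPoly_X_pow_sub_one, ← Skew.ofPoly_smul, hu]
    simp
  · rintro _ ⟨c, hc, rfl⟩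
    obtain ⟨p, hp⟩ := exists_wordPoly_eq_C_mul hπ hker hϖ hlin hcyc hnomonic hc
    have hpP : C ϖ * p ∈ P := ⟨c, hc, congrArg (Skew.quotOfPoly θ s) hp⟩
    have hspan := Submodule.mem_map_of_mem (f := Skew.quotOfPoly θ s)
      (Skew.C_mul_mem_span_of_torsion_eq_span hπ hθϖ hθ P hker hϖ hg hpP)
    rw [Submodule.map_span, Set.image_singleton, ← hp] at hspan
    exact hspan
  · have hqP : C ϖ * q ∈ P := (hmem q).1 (hg ▸ Submodule.mem_span_singleton_self _)
    exact (Submodule.span_singleton_le_iff_mem _ Q).2 hqP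

end SquareZero

/-! ### The Galois ring `R₄` -/

section GaloisRing

lemma ker_quotientMap_of_surjective {R S : Type*} [CommRing R] [CommRing S] {f : R →+* S}
    (hf : Function.Surjective f) {I : Ideal R} {J : Ideal S} (hJ : J = I.map f)
    (hIJ : I ≤ J.comap f) :
    RingHom.ker (Ideal.quotientMap J f hIJ) = (RingHom.ker f).map (Ideal.Quotient.mk I) := by
  subst hJ
  refine (Ideal.ker_quotient_lift _ _).trans ?_
  rw [← RingHom.comap_ker, Ideal.mk_ker,
    Ideal.comap_map_of_surjective' f hf, Ideal.map_sup, Ideal.map_quotient_self, bot_sup_eq]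

lemma bar_surjective : Function.Surjective bar := ZMod.ringHom_surjective bar

lemma ker_bar : RingHom.ker bar = Ideal.span {2} := by
  ext a
  rw [RingHom.mem_ker, Ideal.mem_span_singleton]
  revert a
  decide

variable (h : Z4[X])

lemma barR_surjective : Function.Surjective (barR h) :=
  Ideal.quotientMap_surjective (map_surjective bar bar_surjective)

lemma ker_barR : RingHom.ker (barR h) = Ideal.span {2} := by
  rw [barR, ker_quotientMap_of_surjective (map_surjective bar bar_surjective)
    (by simp [Ideal.map_span]), ker_mapRingHom, ker_bar, Ideal.map_span,
    Ideal.map_span, Set.image_singleton, Set.image_singleton, map_ofNat, map_ofNat]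

lemma two_sq_R4 : (2 : R4 h) ^ 2 = 0 := by
  have hfour : (2 : Z4) ^ 2 = 0 := by decide
  rw [← map_ofNat (algebraMap Z4 (R4 h)) 2, ← map_pow, hfour, map_zero]

variable {h}

lemma rep2_mk_map (hmon : h.Monic) (p : Z4[X]) :
    rep2 h (Ideal.Quotient.mk _ (p.map bar)) = (p %ₘ h).map bar := by
  rw [map_modByMonic _ hmon, rep2]
  apply modByMonic_eq_of_dvd_sub (hmon.map bar)
  rw [← Ideal.mem_span_singleton, ← Ideal.Quotient.eq]
  exact Quotient.out_eq _

lemma rep2_barR (hmon : h.Monic) (a : R4 h) : rep2 h (barR h a) = (rep4 h a).map bar := by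
  conv_lhs => rw [← Ideal.Quotient.mk_out a]
  exact rep2_mk_map hmon _

lemma barR_thetaFun4 (hmon : h.Monic) (a : R4 h) :
    barR h (thetaFun4 h a) = thetaFun2 h (barR h a) := by
  have hxi : barR h (xi h) = xibar h := by simp [barR, xi, xibar]
  rw [thetaFun4, thetaFun2, rep2_barR hmon, aeval_def, aeval_def, hom_eval₂, eval₂_map, map_pow,
    hxi]
  congr 1
  exact RingHom.ext_zmod _ _

lemma barR_comp_eq_comp_barR (hmon : h.Monic) {θ4 : R4 h →+* R4 h} (hθ4 : ⇑θ4 = thetaFun4 h)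
    {θ2 : R2 h →+* R2 h} (hθ2 : ⇑θ2 = thetaFun2 h) : (barR h).comp θ4 = θ2.comp (barR h) :=
  RingHom.ext fun a ↦ by simp [hθ4, hθ2, barR_thetaFun4 hmon]

end GaloisRing

/-- A skew cyclic code of length `s` over `R₄` containing no monic
skew polynomial is generated by `2q(x)` where `q̄(x)` is a right divisor of `x^s-1`
in `R₂[x,θ₂]`. -/
theorem skew_cyclic_no_monic_generator
    (m : ℕ) (hm : 1 ≤ m) (h : Z4[X]) (hbp : BasicPrimitive h m)
    (θ4 : R4 h →+* R4 h) (hθ4 : ⇑θ4 = thetaFun4 h)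
    (θ2 : R2 h →+* R2 h) (hθ2 : ⇑θ2 = thetaFun2 h)
    (s : ℕ) [NeZero s]
    (C : Set (Fin s → R4 h)) (hlin : IsLinearCode (R4 h) C)
    (hcyc : ∀ c ∈ C, skewShift θ4 c ∈ C)
    (hnomonic : ¬ ∃ c ∈ C, (wordPoly c).Monic) :
    ∃ q : Polynomial (R4 h),
      RDvd (ofPoly θ2 (q.map (barR h))) (xSkew (R2 h) θ2 ^ s - 1) ∧
      wordToQuot θ4 '' C =
        ↑(Submodule.span (Skew (R4 h) θ4)
          {(Submodule.Quotient.mk (p := skewIdeal (R4 h) θ4 s) (ofPoly θ4 (2 * q)))}) := by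
  have : (Ideal.span {h.map bar}).IsMaximal :=
    PrincipalIdealRing.isMaximal_of_irreducible hbp.2.2.1
  let : Field (R2 h) := Ideal.Quotient.field _
  exact skew_cyclic_no_monic_generator_general (barR_surjective h) (ker_barR h) (two_sq_R4 h)
    (map_ofNat θ4 2) (barR_comp_eq_comp_barR hbp.1 hθ4 hθ2) hlin hcyc hnomonic
end
end
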